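/- arXiv:1509.02766 — 2 statements merged into one kernel-verified Lean document; each statement's English description precedes it below -/
import Mathlib

section
/- Let a₋ > 0, a₊ > 0 and set δ = 2(a₊ − a₋)/(a₊ + a₋). Let δ₁ be a real number and suppose ε₁, ε₃ are real numbers satisfying ε₃ − ε₁ = −δ₁ and a₋·h(ε₁) + a₊·h(ε₃) = a₊·h(δ₁). Then |ε₁ − δ₁| = |ε₃| ≤ (1/2)|δ₁ δ|. Moreover, ε₁ has the same sign as δ₁ (in particular ε₁ = 0 iff δ₁ = 0), and ε₃ has the same sign as the product δ·δ₁. -/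
/-- The function `h` from the paper: `h(ε) = ε` if `ε ≥ 0`, `h(ε) = sinh ε` if `ε < 0`. -/
noncomputable def hfun (ε : ℝ) : ℝ := if 0 ≤ ε then ε else Real.sinh ε

/-!
Eliminate the transmitted wave `ε₁ = δ₁ + ε₃`: the reflected wave `y = ε₃` solves `G y = a₊ h(δ₁)`
for the strictly increasing function `G y = a₋ h(δ₁ + y) + a₊ h(y)`. Hence `y` lies on the same
side of any `z` as `a₊ h(δ₁)` does of `G z`. Taking `z = 0` gives the sign of `ε₃`, taking
`z = -δ₁` gives the sign of `ε₁`, and taking `z = δ₁ δ / 2`, the solution of the linear problem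
`h = id`, gives the bound. That last comparison follows from `h x ≤ x` for `δ₁ ≥ 0`; for `δ₁ < 0`
it reduces to two inequalities for `sinh`, both consequences of its convexity on `[0, ∞)`.
-/

section Convexity

theorem add_mul_sub_le_of_convexOn {S : Set ℝ} {f : ℝ → ℝ} {f' x y : ℝ} (hf : ConvexOn ℝ S f)
    (hx : x ∈ S) (hy : y ∈ S) (hf' : HasDerivAt f f' x) : f x + f' * (y - x) ≤ f y := by
  rcases lt_trichotomy x y with hxy | rfl | hyx
  · have h := hf.le_slope_of_hasDerivAt hx hy hxy hf'
    rw [slope_def_field, le_div_iff₀ (sub_pos.2 hxy)] at h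
    linarith
  · simp
  · have h := hf.slope_le_of_hasDerivAt hy hx hyx hf'
    rw [slope_def_field, div_le_iff₀ (sub_pos.2 hyx)] at h
    linarith

theorem convexOn_sinh : ConvexOn ℝ (Set.Ici 0) Real.sinh := by
  refine MonotoneOn.convexOn_of_deriv (convex_Ici 0) Real.continuous_sinh.continuousOn
    Real.differentiable_sinh.differentiableOn ?_
  rw [Real.deriv_sinh]
  exact Real.cosh_strictMonoOn.monotoneOn.mono interior_subset

theorem sinh_le_mul_cosh {x : ℝ} (hx : 0 ≤ x) : Real.sinh x ≤ x * Real.cosh x := by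
  have h := add_mul_sub_le_of_convexOn convexOn_sinh hx Set.self_mem_Ici (Real.hasDerivAt_sinh x)
  rw [Real.sinh_zero] at h
  linarith

theorem sinh_two_mul_le {x : ℝ} (hx : 0 ≤ x) :
    Real.sinh (2 * x) ≤ x * (1 + Real.cosh (2 * x)) :=
  calc Real.sinh (2 * x) = 2 * Real.cosh x * Real.sinh x := by rw [Real.sinh_two_mul]; ring
    _ ≤ 2 * Real.cosh x * (x * Real.cosh x) :=
      mul_le_mul_of_nonneg_left (sinh_le_mul_cosh hx) (by positivity)
    _ = x * (1 + Real.cosh (2 * x)) := by rw [Real.cosh_two_mul, Real.sinh_sq]; ring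

theorem sinh_mul_le_mul_sinh {c x : ℝ} (hc₀ : 0 ≤ c) (hc₁ : c ≤ 1) (hx : 0 ≤ x) :
    Real.sinh (c * x) ≤ c * Real.sinh x := by
  simpa using convexOn_sinh.2 hx Set.self_mem_Ici hc₀ (sub_nonneg.2 hc₁) (add_sub_cancel c 1)

theorem mul_sinh_mul_le_mul_sinh_mul {a b s : ℝ} (ha : 0 ≤ a) (hab : a ≤ b) (hs : 0 ≤ s) :
    b * Real.sinh (a * s) ≤ a * Real.sinh (b * s) := by
  rcases (ha.trans hab).eq_or_lt with rfl | hb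
  · simp [le_antisymm hab ha]
  · have h := sinh_mul_le_mul_sinh (div_nonneg ha hb.le) ((div_le_one hb).2 hab)
      (mul_nonneg hb.le hs)
    rwa [← mul_assoc, div_mul_cancel₀ a hb.ne', div_mul_eq_mul_div, le_div_iff₀' hb] at h

theorem sinh_add_sub_sinh_sub (x y : ℝ) :
    Real.sinh (x + y) - Real.sinh (x - y) = 2 * Real.cosh x * Real.sinh y := by
  rw [Real.sinh_add, Real.sinh_sub]
  ring

theorem mul_sinh_add_mul_le {a b s : ℝ} (ha : 0 ≤ a) (hab : a ≤ b) (hs : 0 ≤ s) :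
    b * Real.sinh ((a + b) * s) ≤
      a * Real.sinh (2 * b * s) + b * Real.sinh ((b - a) * s) := by
  have hdiff : b * (Real.sinh ((a + b) * s) - Real.sinh ((b - a) * s)) ≤
      a * Real.sinh (2 * b * s) :=
    calc b * (Real.sinh ((a + b) * s) - Real.sinh ((b - a) * s))
        = 2 * Real.cosh (b * s) * (b * Real.sinh (a * s)) := by
          rw [show (a + b) * s = b * s + a * s by ring, sub_mul, sinh_add_sub_sinh_sub]
          ring
      _ ≤ 2 * Real.cosh (b * s) * (a * Real.sinh (b * s)) :=
          mul_le_mul_of_nonneg_left (mul_sinh_mul_le_mul_sinh_mul ha hab hs) (by positivity)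
      _ = a * Real.sinh (2 * b * s) := by
          rw [mul_assoc 2 b s, Real.sinh_two_mul]
          ring
  linarith

theorem mul_sinh_two_mul_le {a b s : ℝ} (hb : 0 ≤ b) (hba : b ≤ a) (hs : 0 ≤ s) :
    a * Real.sinh (2 * b * s) ≤ b * (Real.sinh ((a + b) * s) + (a - b) * s) := by
  have htangent : Real.sinh (2 * b * s) + Real.cosh (2 * b * s) * ((a - b) * s) ≤
      Real.sinh ((a + b) * s) := by
    have h := add_mul_sub_le_of_convexOn convexOn_sinh (x := 2 * b * s) (y := (a + b) * s)
      (Set.mem_Ici.2 (by positivity))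
      (Set.mem_Ici.2 (mul_nonneg (add_nonneg (hb.trans hba) hb) hs)) (Real.hasDerivAt_sinh _)
    rwa [← sub_mul, show a + b - 2 * b = a - b by ring] at h
  have hdouble : Real.sinh (2 * b * s) ≤ b * s * (1 + Real.cosh (2 * b * s)) := by
    simpa only [mul_assoc] using sinh_two_mul_le (mul_nonneg hb hs)
  calc a * Real.sinh (2 * b * s)
      = b * Real.sinh (2 * b * s) + (a - b) * Real.sinh (2 * b * s) := by ring
    _ ≤ b * Real.sinh (2 * b * s) + (a - b) * (b * s * (1 + Real.cosh (2 * b * s))) := by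
        gcongr
    _ = b * (Real.sinh (2 * b * s) + Real.cosh (2 * b * s) * ((a - b) * s) + (a - b) * s) := by
        ring
    _ ≤ b * (Real.sinh ((a + b) * s) + (a - b) * s) := by gcongr

end Convexity

section Sign

theorem real_sign_eq_coe_sign (x : ℝ) : Real.sign x = (SignType.sign x : ℝ) := by
  rcases lt_trichotomy x 0 with hx | rfl | hx
  · simp [Real.sign_of_neg hx, sign_neg hx]
  · simp
  · simp [Real.sign_of_pos hx, sign_pos hx]

theorem sign_map_sub_map_of_strictMono {α β : Type*} [AddCommGroup α] [LinearOrder α]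
    [IsOrderedAddMonoid α] [AddCommGroup β] [LinearOrder β] [IsOrderedAddMonoid β]
    {f : α → β} (hf : StrictMono f) (x y : α) :
    SignType.sign (f x - f y) = SignType.sign (x - y) := by
  simp only [sign_apply, sub_pos, sub_neg, hf.lt_iff_lt]

theorem sign_map_of_strictMono {α β : Type*} [AddCommGroup α] [LinearOrder α]
    [IsOrderedAddMonoid α] [AddCommGroup β] [LinearOrder β] [IsOrderedAddMonoid β]
    {f : α → β} (hf : StrictMono f) (hf₀ : f 0 = 0) (x : α) :
    SignType.sign (f x) = SignType.sign x := by
  simpa only [hf₀, sub_zero] using sign_map_sub_map_of_strictMono hf x 0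

end Sign

section WaveBalance

variable {K : Type*} [CommRing K]

/-- The left-hand side `a f(x) + b f(y)` of the interaction equation as a function of the reflected
strength `y`, the transmitted strength being `x = d + y` for an incoming wave of strength `d`. -/
def waveBalance (f : K → K) (a b d y : K) : K := a * f (d + y) + b * f y

/- For `f = id` and `d = (a + b) s`, the interaction equation has the solution `y = (b - a) s`. -/
theorem waveBalance_add_mul_sub_mul (f : K → K) (a b s : K) :
    waveBalance f a b ((a + b) * s) ((b - a) * s) =
      a * f (2 * b * s) + b * f ((b - a) * s) := by
  rw [waveBalance, show (a + b) * s + (b - a) * s = 2 * b * s by ring]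

variable [LinearOrder K] [IsStrictOrderedRing K] {f : K → K} {a b d y : K}

theorem strictMono_waveBalance (hf : StrictMono f) (ha : 0 ≤ a) (hb : 0 < b) (d : K) :
    StrictMono (waveBalance f a b d) := fun _ _ hxy =>
  add_lt_add_of_le_of_lt
    (mul_le_mul_of_nonneg_left (hf.monotone (add_le_add_right hxy.le d)) ha)
    (mul_lt_mul_of_pos_left (hf hxy) hb)

theorem sign_transmitted (hf : StrictMono f) (hf₀ : f 0 = 0) (ha : 0 ≤ a) (hb : 0 < b)
    (h : waveBalance f a b d y = b * f d) : SignType.sign (d + y) = SignType.sign d :=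
  calc SignType.sign (d + y)
      = SignType.sign (y - -d) := by rw [sub_neg_eq_add, add_comm]
    _ = SignType.sign (waveBalance f a b d y - waveBalance f a b d (-d)) :=
        (sign_map_sub_map_of_strictMono (strictMono_waveBalance hf ha hb d) _ _).symm
    _ = SignType.sign (b * (f d - f (-d))) := by
        rw [h, waveBalance, add_neg_cancel, hf₀, mul_zero, zero_add, mul_sub]
    _ = SignType.sign (2 * d) := by
        rw [sign_mul, sign_pos hb, one_mul, sign_map_sub_map_of_strictMono hf, sub_neg_eq_add,
          two_mul]
    _ = SignType.sign d := by rw [sign_mul, sign_pos two_pos, one_mul]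

theorem sign_reflected (hf : StrictMono f) (hf₀ : f 0 = 0) (ha : 0 ≤ a) (hb : 0 < b)
    (h : waveBalance f a b d y = b * f d) :
    SignType.sign y = SignType.sign ((b - a) * d) :=
  calc SignType.sign y
      = SignType.sign (waveBalance f a b d y - waveBalance f a b d 0) := by
        rw [sign_map_sub_map_of_strictMono (strictMono_waveBalance hf ha hb d), sub_zero]
    _ = SignType.sign ((b - a) * f d) := by
        rw [h, waveBalance, add_zero, hf₀, mul_zero, add_zero, sub_mul]
    _ = SignType.sign ((b - a) * d) := by
        rw [sign_mul, sign_map_of_strictMono hf hf₀, ← sign_mul]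

end WaveBalance

section Hfun

theorem hfun_of_nonneg {x : ℝ} (hx : 0 ≤ x) : hfun x = x := if_pos hx

theorem hfun_zero : hfun 0 = 0 := hfun_of_nonneg le_rfl

theorem hfun_of_nonpos {x : ℝ} (hx : x ≤ 0) : hfun x = Real.sinh x := by
  rcases hx.eq_or_lt with rfl | hx
  · rw [hfun_zero, Real.sinh_zero]
  · exact if_neg hx.not_ge

theorem hfun_neg_of_nonneg {x : ℝ} (hx : 0 ≤ x) : hfun (-x) = -Real.sinh x := by
  rw [hfun_of_nonpos (neg_nonpos.2 hx), Real.sinh_neg]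

theorem hfun_le_self (x : ℝ) : hfun x ≤ x := by
  rcases le_total 0 x with hx | hx
  · exact (hfun_of_nonneg hx).le
  · exact (hfun_of_nonpos hx).trans_le (Real.sinh_le_self_iff.2 hx)

theorem strictMono_hfun : StrictMono hfun :=
  StrictMonoOn.Iic_union_Ici (a := 0)
    ((Real.sinh_strictMono.strictMonoOn _).congr fun _ hx => (hfun_of_nonpos hx).symm)
    (strictMonoOn_id.congr fun _ hx => (hfun_of_nonneg hx).symm)

variable {a b s y : ℝ}

theorem le_waveBalance_hfun (ha : 0 < a) (hb : 0 < b) (hs : 0 ≤ (b - a) * s) :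
    b * hfun ((a + b) * s) ≤ waveBalance hfun a b ((a + b) * s) ((b - a) * s) := by
  rw [waveBalance_add_mul_sub_mul, hfun_of_nonneg hs]
  rcases le_or_gt 0 s with hs₀ | hs₀
  · rw [hfun_of_nonneg (by positivity), hfun_of_nonneg (by positivity)]
    linarith
  · obtain ⟨r, hr, rfl⟩ : ∃ r, 0 < r ∧ s = -r := ⟨-s, neg_pos.2 hs₀, (neg_neg s).symm⟩
    have hba : b ≤ a := sub_nonpos.1 (nonpos_of_mul_nonneg_left hs hs₀)
    rw [mul_neg, mul_neg, mul_neg, hfun_neg_of_nonneg (by positivity),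
      hfun_neg_of_nonneg (by positivity)]
    linarith [mul_sinh_two_mul_le hb.le hba hr.le]

theorem waveBalance_hfun_le (ha : 0 < a) (hb : 0 < b) (hs : (b - a) * s ≤ 0) :
    waveBalance hfun a b ((a + b) * s) ((b - a) * s) ≤ b * hfun ((a + b) * s) := by
  rw [waveBalance_add_mul_sub_mul]
  rcases le_or_gt 0 s with hs₀ | hs₀
  · rw [hfun_of_nonneg (x := 2 * b * s) (by positivity),
      hfun_of_nonneg (x := (a + b) * s) (by positivity)]
    linarith [mul_le_mul_of_nonneg_left (hfun_le_self ((b - a) * s)) hb.le]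
  · obtain ⟨r, hr, rfl⟩ : ∃ r, 0 < r ∧ s = -r := ⟨-s, neg_pos.2 hs₀, (neg_neg s).symm⟩
    have hab : a ≤ b := sub_nonneg.1 (nonneg_of_mul_nonpos_left hs hs₀)
    rw [mul_neg, mul_neg, mul_neg, hfun_neg_of_nonneg (by positivity),
      hfun_neg_of_nonneg (mul_nonneg (sub_nonneg.2 hab) hr.le),
      hfun_neg_of_nonneg (by positivity)]
    linarith [mul_sinh_add_mul_le ha.le hab hr.le]

theorem abs_reflected_le (ha : 0 < a) (hb : 0 < b)
    (h : waveBalance hfun a b ((a + b) * s) y = b * hfun ((a + b) * s)) :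
    |y| ≤ |(b - a) * s| := by
  have hmono := strictMono_waveBalance strictMono_hfun ha.le hb ((a + b) * s)
  have hsign : SignType.sign y = SignType.sign ((b - a) * s) := by
    rw [sign_reflected strictMono_hfun hfun_zero ha.le hb h, mul_left_comm, sign_mul,
      sign_pos (add_pos ha hb), one_mul]
  rcases le_total 0 ((b - a) * s) with hs | hs
  · have hy : 0 ≤ y := by rwa [← sign_nonneg_iff, hsign, sign_nonneg_iff]
    exact abs_le_abs_of_nonneg hy (hmono.le_iff_le.1 (h.trans_le (le_waveBalance_hfun ha hb hs)))
  · have hy : y ≤ 0 := by rwa [← sign_nonpos_iff, hsign, sign_nonpos_iff]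
    exact abs_le_abs_of_nonpos hy
      (hmono.le_iff_le.1 ((waveBalance_hfun_le ha hb hs).trans_eq h.symm))

end Hfun

/-- Interaction estimate for a 1-wave hitting a composite wave (Accurate solver). -/
theorem stmt1 (am ap δ δ₁ ε₁ ε₃ : ℝ) (ham : 0 < am) (hap : 0 < ap)
    (hδ : δ = 2 * (ap - am) / (ap + am))
    (h1 : ε₃ - ε₁ = -δ₁)
    (h2 : am * hfun ε₁ + ap * hfun ε₃ = ap * hfun δ₁) :
    |ε₁ - δ₁| = |ε₃| ∧ |ε₃| ≤ (1/2) * |δ₁ * δ| ∧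
    Real.sign ε₁ = Real.sign δ₁ ∧ Real.sign ε₃ = Real.sign (δ * δ₁) := by
  obtain rfl : ε₁ = δ₁ + ε₃ := by linarith
  have hsum : 0 < am + ap := add_pos ham hap
  have hδ' : δ = 2 / (am + ap) * (ap - am) := by rw [hδ, add_comm ap, mul_div_right_comm]
  have hδ₁ : (am + ap) * (δ₁ / (am + ap)) = δ₁ := mul_div_cancel₀ δ₁ hsum.ne'
  simp only [real_sign_eq_coe_sign]
  refine ⟨by rw [add_sub_cancel_left], ?_, ?_, ?_⟩
  · calc |ε₃| ≤ |(ap - am) * (δ₁ / (am + ap))| := abs_reflected_le ham hap (by rwa [hδ₁])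
      _ = |1 / 2 * (δ₁ * δ)| := by rw [hδ']; ring_nf
      _ = 1 / 2 * |δ₁ * δ| := by rw [abs_mul, abs_of_pos one_half_pos]
  · rw [sign_transmitted strictMono_hfun hfun_zero ham.le hap h2]
  · rw [sign_reflected strictMono_hfun hfun_zero ham.le hap h2, hδ', mul_assoc, sign_mul (2 / _),
      sign_pos (div_pos two_pos hsum), one_mul]
end

section
/- Let a₋ > 0, a₊ > 0 and set δ = 2(a₊ − a₋)/(a₊ + a₋). Let ρ > 0, set C₀ = sinh ρ / ρ, and let δ₃ be a real number with |δ₃| ≤ ρ. Suppose ε₁, ε₃ are real numbers satisfying ε₃ − ε₁ = δ₃ and a₋·ε₁ + a₊·h(ε₃) = a₋·h(δ₃). Then |ε₃ − δ₃| = |ε₁|, and |ε₁| ≤ (C₀/2)|δ₃ δ| if δ₃ < 0 and δ < 0, while |ε₁| ≤ (1/2)|δ₃ δ| in all other cases. -/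
/-!
Eliminating `ε₁ = ε₃ - δ₃` leaves one equation `a₋ (y - x) + a₊ h(y) = a₋ h(x)` between `x = δ₃`
and `y = ε₃`. Its left side is strictly increasing in `y`, so `y` has the sign of `x` and is bounded
by any test value at which the two sides can be compared. For `x ≥ 0` the equation is linear. For
`x < 0` reflect to `x > 0`, with `sinh` in place of `h`. If `a₊ ≤ a₋`, then `x ≤ y` and the
monotonicity of `sinh - id` bounds `y - x` by a multiple of `sinh x`, which lies below the chord of
`sinh` over `[0, ρ]`. If `a₋ ≤ a₊`, the test value is `t x` with `t = 1 - δ / 2 = 2 a₋ / (a₊ + a₋)`: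
as the Taylor series of `sinh - id` starts at order three and has nonnegative coefficients,
`sinh (t x) - t x ≤ t³ (sinh x - x)`, and `a₊ t³ ≤ a₋` by the AM-GM inequality.
-/

section Sinh

variable {t x r : ℝ}

theorem sinh_mul_sub_mul_le (ht₀ : 0 ≤ t) (ht₁ : t ≤ 1) (hx : 0 ≤ x) :
    Real.sinh (t * x) - t * x ≤ t ^ 3 * (Real.sinh x - x) := by
  have hsum := ((Real.hasSum_sinh x).mul_left (t ^ 3)).sub (Real.hasSum_sinh (t * x))
  have hterm : ∀ n ≠ 0, 0 ≤ t ^ 3 * (x ^ (2 * n + 1) / ((2 * n + 1).factorial : ℝ)) -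
      (t * x) ^ (2 * n + 1) / ((2 * n + 1).factorial : ℝ) := by
    intro n hn
    have hpow : t ^ (2 * n + 1) ≤ t ^ 3 := pow_le_pow_of_le_one ht₀ ht₁ (by lia)
    rw [mul_pow, mul_div_assoc, ← sub_mul]
    exact mul_nonneg (sub_nonneg.2 hpow) (by positivity)
  have hlinear := le_hasSum hsum 0 hterm
  simp only [mul_zero, zero_add, pow_one, Nat.factorial_one, Nat.cast_one, div_one] at hlinear
  linarith

theorem sinh_mul_le_mul_sinh_s4 (ht₀ : 0 ≤ t) (ht₁ : t ≤ 1) (hx : 0 ≤ x) :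
    Real.sinh (t * x) ≤ t * Real.sinh x := by
  have hpow : t ^ 3 ≤ t := pow_le_of_le_one ht₀ ht₁ (by decide)
  have hexcess : 0 ≤ Real.sinh x - x := sub_nonneg.2 (Real.self_le_sinh_iff.2 hx)
  linarith [sinh_mul_sub_mul_le ht₀ ht₁ hx, mul_le_mul_of_nonneg_right hpow hexcess]

theorem sinh_le_sinh_div_mul (hx : 0 ≤ x) (hr : 0 < r) (hxr : x ≤ r) :
    Real.sinh x ≤ Real.sinh r / r * x := by
  calc Real.sinh x = Real.sinh (x / r * r) := by rw [div_mul_cancel₀ _ hr.ne']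
    _ ≤ x / r * Real.sinh r :=
      sinh_mul_le_mul_sinh_s4 (div_nonneg hx hr.le) ((div_le_one hr).2 hxr) hr.le
    _ = Real.sinh r / r * x := by ring

end Sinh

theorem hfun_of_neg {x : ℝ} (hx : x < 0) : hfun x = Real.sinh x := if_neg hx.not_ge

theorem hfun_eq_min (x : ℝ) : hfun x = min x (Real.sinh x) := by
  rcases le_or_gt 0 x with hx | hx
  · rw [hfun_of_nonneg hx, min_eq_left (Real.self_le_sinh_iff.2 hx)]
  · rw [hfun_of_neg hx, min_eq_right (Real.sinh_le_self_iff.2 hx.le)]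

theorem monotone_hfun : Monotone hfun := by
  rw [funext hfun_eq_min]
  exact monotone_id.min Real.sinh_strictMono.monotone

theorem strictMono_mul_sub_add_mul {f : ℝ → ℝ} {a b : ℝ} (hf : Monotone f) (ha : 0 < a)
    (hb : 0 ≤ b) (x : ℝ) : StrictMono fun w ↦ a * (w - x) + b * f w :=
  ((strictMono_id.add_const (-x)).const_mul ha).add_monotone (hf.const_mul hb)

/-- The phase strength `δ` of a composite wave, where `a = a₋` and `b = a₊`. Up to sign, half of it
is the reflection coefficient of the linearized interaction. -/
noncomputable def phaseStrength (a b : ℝ) : ℝ := 2 * (b - a) / (b + a)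

section PhaseStrength

variable {a b : ℝ}

theorem phaseStrength_neg_iff (hab : 0 < b + a) : phaseStrength a b < 0 ↔ b < a := by
  rw [phaseStrength, div_lt_iff₀ hab]
  constructor <;> intro h <;> linarith

theorem phaseStrength_nonneg_iff (hab : 0 < b + a) : 0 ≤ phaseStrength a b ↔ a ≤ b := by
  rw [← not_lt, phaseStrength_neg_iff hab, not_lt]

theorem half_phaseStrength_mul_add (hab : b + a ≠ 0) : phaseStrength a b / 2 * (b + a) = b - a := by
  rw [phaseStrength]
  field_simp

theorem mul_one_sub_half_phaseStrength_pow_three_le (ha : 0 < a) (hab : a ≤ b) :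
    b * (1 - phaseStrength a b / 2) ^ 3 ≤ a := by
  have hpos : 0 < b + a := by linarith
  have heq : b * (1 - phaseStrength a b / 2) ^ 3 = 2 * a ^ 2 * (4 * b * a) / (b + a) ^ 3 := by
    rw [phaseStrength]
    field_simp
    ring
  have hamgm : 4 * b * a ≤ (b + a) ^ 2 := four_mul_le_sq_add b a
  rw [heq, div_le_iff₀ (by positivity)]
  calc 2 * a ^ 2 * (4 * b * a) ≤ 2 * a ^ 2 * (b + a) ^ 2 := by gcongr
    _ = a * ((a + a) * (b + a) ^ 2) := by ring
    _ ≤ a * ((b + a) * (b + a) ^ 2) := by gcongr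
    _ = a * (b + a) ^ 3 := by ring

end PhaseStrength

/-- The equation satisfied by the strengths `x = δ₃` of the incoming and `y = ε₃` of the transmitted
3-wave, where `a = a₋`, `b = a₊` and the reflected 1-wave has been eliminated as `ε₁ = y - x`. The
function `h` is replaced by an arbitrary `f`, so that reflection at `0` is expressible. -/
def InteractionEq (f : ℝ → ℝ) (a b x y : ℝ) : Prop :=
  a * (y - x) + b * f y = a * f x

namespace InteractionEq

variable {f : ℝ → ℝ} {a b x y z : ℝ}

theorem le_iff (hf : Monotone f) (ha : 0 < a) (hb : 0 ≤ b) (h : InteractionEq f a b x y) :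
    z ≤ y ↔ a * (z - x) + b * f z ≤ a * f x := by
  rw [← h, (strictMono_mul_sub_add_mul hf ha hb x).le_iff_le]

theorem ge_iff (hf : Monotone f) (ha : 0 < a) (hb : 0 ≤ b) (h : InteractionEq f a b x y) :
    y ≤ z ↔ a * f x ≤ a * (z - x) + b * f z := by
  rw [← h, (strictMono_mul_sub_add_mul hf ha hb x).le_iff_le]

theorem nonneg_iff (hf : Monotone f) (hf₀ : f 0 = 0) (ha : 0 < a) (hb : 0 ≤ b)
    (h : InteractionEq f a b x y) : 0 ≤ y ↔ 0 ≤ x := by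
  have hmono : StrictMono fun w ↦ w + f w := strictMono_id.add_monotone hf
  calc 0 ≤ y ↔ 0 ≤ a * (x + f x) := by
        rw [h.le_iff hf ha hb, hf₀]
        constructor <;> intro hle <;> linarith
    _ ↔ 0 + f 0 ≤ x + f x := by rw [mul_nonneg_iff_of_pos_left ha, hf₀, add_zero]
    _ ↔ 0 ≤ x := hmono.le_iff_le

theorem le_of_right_le_left (hf : Monotone f) (ha : 0 < a) (hb : 0 ≤ b) (hba : b ≤ a) (hx : 0 ≤ f x)
    (h : InteractionEq f a b x y) : x ≤ y := by
  rw [h.le_iff hf ha hb, sub_self, mul_zero, zero_add]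
  gcongr

theorem ge_of_left_le_right (hf : Monotone f) (ha : 0 < a) (hab : a ≤ b) (hx : 0 ≤ f x)
    (h : InteractionEq f a b x y) : y ≤ x := by
  rw [h.ge_iff hf ha (ha.le.trans hab), sub_self, mul_zero, zero_add]
  gcongr

theorem sub_le_neg_half_phaseStrength_mul (hf : Monotone fun w ↦ f w - w) (hb : 0 ≤ b)
    (hab : 0 < b + a) (hxy : x ≤ y) (h : InteractionEq f a b x y) :
    y - x ≤ -(phaseStrength a b / 2) * f x := by
  have hexcess : b * (f x - x) ≤ b * (f y - y) := mul_le_mul_of_nonneg_left (hf hxy) hb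
  refine le_of_mul_le_mul_right ?_ hab
  calc (y - x) * (b + a) ≤ -(b - a) * f x := by unfold InteractionEq at h; linarith
    _ = -(phaseStrength a b / 2) * f x * (b + a) := by
      rw [← half_phaseStrength_mul_add hab.ne']; ring

theorem one_sub_half_phaseStrength_mul_le (ha : 0 < a) (hab : a ≤ b) (hx : 0 ≤ x)
    (h : InteractionEq Real.sinh a b x y) : (1 - phaseStrength a b / 2) * x ≤ y := by
  have hb : 0 < b := ha.trans_le hab
  have hpos : 0 < b + a := by positivity
  have hδ := half_phaseStrength_mul_add hpos.ne'
  have hcube := mul_one_sub_half_phaseStrength_pow_three_le ha hab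
  have hδ₀ : 0 ≤ phaseStrength a b := (phaseStrength_nonneg_iff hpos).2 hab
  have hexcess : 0 ≤ Real.sinh x - x := sub_nonneg.2 (Real.self_le_sinh_iff.2 hx)
  rw [h.le_iff Real.sinh_strictMono.monotone ha hb.le]
  set t := 1 - phaseStrength a b / 2 with ht
  have hsum : t * (b + a) = 2 * a := by rw [ht, sub_mul, hδ]; ring
  have ht₀ : 0 ≤ t := by
    refine nonneg_of_mul_nonneg_left ?_ hpos
    rw [hsum]
    positivity
  calc a * (t * x - x) + b * Real.sinh (t * x)
      = t * (b + a) * x - a * x + b * (Real.sinh (t * x) - t * x) := by ring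
    _ ≤ t * (b + a) * x - a * x + b * (t ^ 3 * (Real.sinh x - x)) := by
      gcongr
      exact sinh_mul_sub_mul_le ht₀ (by linarith) hx
    _ = a * x + b * t ^ 3 * (Real.sinh x - x) := by rw [hsum]; ring
    _ ≤ a * x + a * (Real.sinh x - x) := by gcongr
    _ = a * Real.sinh x := by ring

theorem reflect_of_neg (ha : 0 < a) (hb : 0 ≤ b) (hx : x < 0) (h : InteractionEq hfun a b x y) :
    InteractionEq Real.sinh a b (-x) (-y) := by
  have hy : y < 0 :=
    not_le.1 fun hy ↦ hx.not_ge ((h.nonneg_iff monotone_hfun (hfun_of_nonneg le_rfl) ha hb).1 hy)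
  rw [InteractionEq, hfun_of_neg hx, hfun_of_neg hy] at h
  rw [InteractionEq, Real.sinh_neg, Real.sinh_neg]
  linarith

theorem abs_sub_eq_of_nonneg (ha : 0 < a) (hb : 0 ≤ b) (hx : 0 ≤ x)
    (h : InteractionEq hfun a b x y) : |y - x| = 1 / 2 * |x * phaseStrength a b| := by
  have hy : 0 ≤ y := (h.nonneg_iff monotone_hfun (hfun_of_nonneg le_rfl) ha hb).2 hx
  have hpos : 0 < b + a := by positivity
  rw [InteractionEq, hfun_of_nonneg hx, hfun_of_nonneg hy] at h
  have hsub : y - x = -(1 / 2 * (x * phaseStrength a b)) := by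
    refine mul_right_cancel₀ hpos.ne' ?_
    linear_combination h + x * half_phaseStrength_mul_add hpos.ne'
  rw [hsub, abs_neg, abs_mul, abs_of_pos one_half_pos]

theorem abs_sub_le_of_neg_of_left_le_right (ha : 0 < a) (hab : a ≤ b) (hx : x < 0)
    (h : InteractionEq hfun a b x y) : |y - x| ≤ 1 / 2 * |x * phaseStrength a b| := by
  have hb : 0 < b := ha.trans_le hab
  have hx' : 0 ≤ -x := neg_nonneg.2 hx.le
  have hrefl := h.reflect_of_neg ha hb.le hx
  have hle : -y ≤ -x :=
    hrefl.ge_of_left_le_right Real.sinh_strictMono.monotone ha hab (Real.sinh_nonneg_iff.2 hx')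
  have hge := hrefl.one_sub_half_phaseStrength_mul_le ha hab hx'
  have hδ : 0 ≤ phaseStrength a b := (phaseStrength_nonneg_iff (by positivity)).2 hab
  rw [abs_of_nonneg (by linarith), abs_mul, abs_of_neg hx, abs_of_nonneg hδ]
  linarith

theorem abs_sub_le_of_neg_of_right_le_left (ha : 0 < a) (hb : 0 ≤ b) (hba : b ≤ a) (hx : x < 0)
    (h : InteractionEq hfun a b x y) :
    |y - x| ≤ 1 / 2 * |Real.sinh x * phaseStrength a b| := by
  have hrefl := h.reflect_of_neg ha hb hx
  have hle : -x ≤ -y := hrefl.le_of_right_le_left Real.sinh_strictMono.monotone ha hb hba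
    (Real.sinh_nonneg_iff.2 (neg_nonneg.2 hx.le))
  have hsub := hrefl.sub_le_neg_half_phaseStrength_mul Real.sinh_sub_id_strictMono.monotone hb
    (by positivity) hle
  rw [Real.sinh_neg] at hsub
  calc |y - x| = -y - -x := by rw [abs_of_nonpos (by linarith)]; ring
    _ ≤ 1 / 2 * (Real.sinh x * phaseStrength a b) := by linarith
    _ ≤ 1 / 2 * |Real.sinh x * phaseStrength a b| := by gcongr; exact le_abs_self _

end InteractionEq

/-- Interaction estimate for a small 3-wave hitting a composite wave (Simplified solver `R_{IL}`). -/
theorem stmt4 (am ap δ ρ C₀ δ₃ ε₁ ε₃ : ℝ) (ham : 0 < am) (hap : 0 < ap)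
    (hδ : δ = 2 * (ap - am) / (ap + am))
    (hρ : 0 < ρ) (hC₀ : C₀ = Real.sinh ρ / ρ) (hδ₃ : |δ₃| ≤ ρ)
    (h1 : ε₃ - ε₁ = δ₃)
    (h2 : am * ε₁ + ap * hfun ε₃ = am * hfun δ₃) :
    |ε₃ - δ₃| = |ε₁| ∧
    ((δ₃ < 0 ∧ δ < 0) → |ε₁| ≤ (C₀ / 2) * |δ₃ * δ|) ∧
    (¬(δ₃ < 0 ∧ δ < 0) → |ε₁| ≤ (1/2) * |δ₃ * δ|) := by
  obtain rfl : ε₁ = ε₃ - δ₃ := by linarith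
  obtain rfl : δ = phaseStrength am ap := hδ
  have hpos : 0 < ap + am := by positivity
  have heq : InteractionEq hfun am ap δ₃ ε₃ := h2
  refine ⟨rfl, fun ⟨hx, hneg⟩ ↦ ?_, fun hcase ↦ ?_⟩
  · have hle : ap ≤ am := ((phaseStrength_neg_iff hpos).1 hneg).le
    calc |ε₃ - δ₃| ≤ 1 / 2 * |Real.sinh δ₃ * phaseStrength am ap| :=
          heq.abs_sub_le_of_neg_of_right_le_left ham hap.le hle hx
      _ ≤ 1 / 2 * (C₀ * |δ₃| * |phaseStrength am ap|) := by
        rw [abs_mul, Real.abs_sinh, hC₀]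
        gcongr
        exact sinh_le_sinh_div_mul (abs_nonneg δ₃) hρ hδ₃
      _ = C₀ / 2 * |δ₃ * phaseStrength am ap| := by rw [abs_mul]; ring
  · rcases le_or_gt 0 δ₃ with hx | hx
    · exact (heq.abs_sub_eq_of_nonneg ham hap.le hx).le
    · have hδ₀ : 0 ≤ phaseStrength am ap := not_lt.1 fun hneg ↦ hcase ⟨hx, hneg⟩
      exact heq.abs_sub_le_of_neg_of_left_le_right ham ((phaseStrength_nonneg_iff hpos).1 hδ₀) hx
end
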